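/- For any integer s with n/2 < s ≤ n, let T' consist of γ_s together with all tuples of weight ⌊n/2⌋ that are incomparable with γ_s, and let T'' consist of all tuples of weight ⌊n/2⌋+1 that are incomparable with γ_s. Then (T', T'') ∈ 𝒜_s and (T', T'') has the maximum cardinality among all pairs in 𝒜_s. -/

import Mathlib

/-!
Identify `Bⁿ` with the subsets of an `n`-element set and let `G` be the support of `γ_s`. If
`(U', U'')` belongs to `𝒜_s`, then `γ_s` is the only member of `U' ∪ U''` below `γ_s`, so `U' \ {γ_s}`
and `U''` are disjoint antichains of sets not contained in `G`, that is, of sets meeting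
`K = Gᶜ`. It remains to show that two disjoint antichains among the sets meeting `K` have together
at most as many members as the levels `n/2` and `n/2 + 1` of that family
(`card_add_card_le_of_not_subset`). Since `n/2 + 1 ≤ s`, a tuple of one of these two weights that
is not below `γ_s` is incomparable with it (`ncard_level_incomparable`), so this bound plus one is
the cardinality of the explicit pair.

The bound comes from a partition of the sets meeting `K` into saturated chains, each of which has
minimal and maximal cardinalities adding up to `n` or `n + 1` (`chainDec_meeting`). Such a chain
meets one of the levels `n/2`, `n/2 + 1`, and both of them if it has at least two members, while
two disjoint antichains contain at most two of its members, and at most one if it is a singleton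
(`SymmChain.card_le`). For the partition, take the usual symmetric chain decomposition of the
subsets of `K`, remove `∅` from its chain, which raises the rank sum of that chain by one, and
adjoin the points of `G` one by one, splitting every chain into two whose rank sum is one larger
(`SymmChain.split`).
-/

/-- The weight of a binary tuple: the number of its 1-components. -/
def bweight {n : ℕ} (α : Fin n → Bool) : ℕ :=
  (Finset.univ.filter fun i => α i = true).card

/-- The tuple `γ_s ∈ Bⁿ` whose first `n - s` components equal `0` and whose
last `s` components equal `1`. -/
def gammaTuple (n s : ℕ) : Fin n → Bool := fun i => decide (n - s ≤ (i : ℕ))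

/-- `T' < T''`: there are no tuples `a ∈ T'`, `b ∈ T''` with `a ≥ b`. -/
def PairBelow {n : ℕ} (T' T'' : Set (Fin n → Bool)) : Prop :=
  ∀ a ∈ T', ∀ b ∈ T'', ¬ b ≤ a

/-- A pair `(T', T'')` of antichains in `Bⁿ` with `T' < T''`. -/
def AntichainPair {n : ℕ} (T' T'' : Set (Fin n → Bool)) : Prop :=
  IsAntichain (· ≤ ·) T' ∧ IsAntichain (· ≤ ·) T'' ∧ PairBelow T' T''

/-- Membership of a pair of antichains in `𝒜_s`: a pair of antichains with
`T' < T''` and `γ_s ∈ T'`. -/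
def MemA {n : ℕ} (s : ℕ) (T' T'' : Set (Fin n → Bool)) : Prop :=
  AntichainPair T' T'' ∧ gammaTuple n s ∈ T'

/-- Membership of a pair of antichains in `𝒜'_t`: a pair of antichains with
`T' < T''` in which every tuple has weight at most `t`. -/
def MemA' {n : ℕ} (t : ℕ) (T' T'' : Set (Fin n → Bool)) : Prop :=
  AntichainPair T' T'' ∧ ∀ α ∈ T' ∪ T'', bweight α ≤ t

/-- The antichain `T'` of Statement 17: `γ_s` together with all tuples of
weight `⌊n/2⌋` incomparable with `γ_s`. -/
def lowerAntichain (n s : ℕ) : Set (Fin n → Bool) :=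
  insert (gammaTuple n s)
    {α | bweight α = n / 2 ∧ ¬ α ≤ gammaTuple n s ∧ ¬ gammaTuple n s ≤ α}

/-- The antichain `T''` of Statement 17: all tuples of weight `⌊n/2⌋ + 1`
incomparable with `γ_s`. -/
def upperAntichain (n s : ℕ) : Set (Fin n → Bool) :=
  {α | bweight α = n / 2 + 1 ∧ ¬ α ≤ gammaTuple n s ∧ ¬ gammaTuple n s ≤ α}

open Finset

/-! ### Nearly symmetric chain decompositions -/

/-- A finite chain of finite sets that is saturated (its cardinalities fill the interval `[a, b]`)
and nearly symmetric: `lo ≤ a + b ≤ hi`. The case `a > b`, in which the chain is empty, is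
allowed. -/
def SymmChain {α : Type*} (lo hi : ℕ) (C : Finset (Finset α)) : Prop :=
  IsChain (· ⊆ ·) (C : Set (Finset α)) ∧
    ∃ a b, lo ≤ a + b ∧ a + b ≤ hi ∧ C.image Finset.card = Finset.Icc a b

/-- Families of finite sets that are disjoint unions of chains satisfying `SymmChain lo hi`. -/
inductive ChainDec {α : Type*} [DecidableEq α] (lo hi : ℕ) : Finset (Finset α) → Prop
  | empty : ChainDec lo hi ∅
  | disjUnion (F C : Finset (Finset α)) : ChainDec lo hi F → SymmChain lo hi C → Disjoint F C →
      ChainDec lo hi (F ∪ C)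

lemma isChain_eq_of_card {α : Type*} {C : Finset (Finset α)} (hC : IsChain (· ⊆ ·) (C : Set (Finset α)))
    {x y : Finset α} (hx : x ∈ C) (hy : y ∈ C) (h : #x = #y) : x = y := by
  rcases hC.total hx hy with h1 | h1
  · exact eq_of_subset_of_card_le h1 h.ge
  · exact (eq_of_subset_of_card_le h1 h.le).symm

lemma isChain_subset_of_card {α : Type*} {C : Finset (Finset α)} (hC : IsChain (· ⊆ ·) (C : Set (Finset α)))
    {x y : Finset α} (hx : x ∈ C) (hy : y ∈ C) (h : #x ≤ #y) : x ⊆ y := by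
  rcases hC.total hx hy with h1 | h1
  · exact h1
  · exact (eq_of_subset_of_card_le h1 h).symm.subset

section
variable {α : Type*} [DecidableEq α]

/-- Adjoining a new point `e` turns a chain with top `T` into two chains: the chain prolonged by
`T ∪ {e}`, and the chain without `T`, with `e` added to every member. -/
lemma SymmChain.split {lo hi : ℕ} {C : Finset (Finset α)} (h : SymmChain lo hi C) (e : α)
    (he : ∀ x ∈ C, e ∉ x) :
    ∃ C₁ C₂, SymmChain (lo + 1) (hi + 1) C₁ ∧ SymmChain (lo + 1) (hi + 1) C₂ ∧
      Disjoint C₁ C₂ ∧ C₁ ∪ C₂ = C ∪ C.image (insert e) := by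
  obtain ⟨hC, a, b, h1, h2, h3⟩ := h
  have hmem : ∀ i, (∃ x ∈ C, #x = i) ↔ a ≤ i ∧ i ≤ b := by
    intro i
    rw [← Finset.mem_Icc, ← h3, Finset.mem_image]
  have hr : ∀ x ∈ C, a ≤ #x ∧ #x ≤ b := fun x hx => (hmem _).1 ⟨x, hx, rfl⟩
  by_cases hab : a ≤ b
  swap
  · have : C = ∅ := by
      rw [Finset.eq_empty_iff_forall_notMem]
      intro x hx
      have := hr x hx
      omega
    subst this
    refine ⟨∅, ∅, ⟨by simp, a + 1, b, by omega, by omega, ?_⟩,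
      ⟨by simp, a + 1, b, by omega, by omega, ?_⟩, by simp, by simp⟩ <;>
    · rw [Finset.Icc_eq_empty (by omega)]; simp
  -- `T` is the top of the chain; for `a = b` the second chain below is empty.
  obtain ⟨T, hT, hTb⟩ := (hmem b).2 ⟨hab, le_rfl⟩
  have hTop : ∀ x ∈ C, x ⊆ T := fun x hx =>
    isChain_subset_of_card hC hx hT (by rw [hTb]; exact (hr x hx).2)
  refine ⟨insert (insert e T) C, (C.erase T).image (insert e),
    ⟨?_, a, b + 1, by omega, by omega, ?_⟩, ⟨?_, a + 1, b, by omega, by omega, ?_⟩, ?_, ?_⟩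
  · rw [Finset.coe_insert]
    exact hC.insert fun x hx _ => Or.inr ((hTop x hx).trans (Finset.subset_insert _ _))
  · rw [Finset.image_insert, h3, Finset.card_insert_of_notMem (he T hT), hTb]
    ext i
    simp only [Finset.mem_insert, Finset.mem_Icc]
    omega
  · intro x hx y hy _
    simp only [Finset.coe_image, Set.mem_image, Finset.mem_coe, Finset.mem_erase] at hx hy
    obtain ⟨x, hx, rfl⟩ := hx
    obtain ⟨y, hy, rfl⟩ := hy
    exact (hC.total hx.2 hy.2).imp (Finset.insert_subset_insert e) (Finset.insert_subset_insert e)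
  · ext i
    simp only [Finset.mem_image, Finset.mem_erase, Finset.mem_Icc, exists_exists_and_eq_and]
    constructor
    · rintro ⟨x, ⟨hxT, hx⟩, rfl⟩
      rw [Finset.card_insert_of_notMem (he x hx)]
      have := hr x hx
      have : #x ≠ b := fun hb => hxT (isChain_eq_of_card hC hx hT (hb.trans hTb.symm))
      omega
    · rintro ⟨hi1, hi2⟩
      obtain ⟨x, hx, hxi⟩ := (hmem (i - 1)).2 ⟨by omega, by omega⟩
      refine ⟨x, ⟨?_, hx⟩, ?_⟩
      · rintro rfl; omega
      · rw [Finset.card_insert_of_notMem (he x hx)]; omega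
  · rw [Finset.disjoint_left]
    intro x hx hx'
    obtain ⟨y, hy, rfl⟩ := Finset.mem_image.1 hx'
    rw [Finset.mem_erase] at hy
    rcases Finset.mem_insert.1 hx with h | h
    · apply hy.1
      rw [← Finset.erase_insert (he y hy.2), h, Finset.erase_insert (he T hT)]
    · exact he _ h (Finset.mem_insert_self _ _)
  · ext x
    simp only [Finset.mem_union, Finset.mem_insert, Finset.mem_image, Finset.mem_erase]
    constructor
    · rintro ((rfl | h) | ⟨y, hy, rfl⟩)
      · exact Or.inr ⟨T, hT, rfl⟩
      · exact Or.inl h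
      · exact Or.inr ⟨y, hy.2, rfl⟩
    · rintro (h | ⟨y, hy, rfl⟩)
      · exact Or.inl (Or.inr h)
      · by_cases hyT : y = T
        · subst hyT; exact Or.inl (Or.inl rfl)
        · exact Or.inr ⟨y, ⟨hyT, hy⟩, rfl⟩

lemma ChainDec.extend {lo hi : ℕ} {F : Finset (Finset α)} (h : ChainDec lo hi F) (e : α)
    (he : ∀ x ∈ F, e ∉ x) : ChainDec (lo + 1) (hi + 1) (F ∪ F.image (insert e)) := by
  induction h with
  | empty => simpa using ChainDec.empty
  | disjUnion F C hF hC hd ih =>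
    have heF : ∀ x ∈ F, e ∉ x := fun x hx => he x (Finset.mem_union_left _ hx)
    have heC : ∀ x ∈ C, e ∉ x := fun x hx => he x (Finset.mem_union_right _ hx)
    obtain ⟨C₁, C₂, h1, h2, h12, hU⟩ := hC.split e heC
    have hdis : Disjoint (F ∪ F.image (insert e)) (C₁ ∪ C₂) := by
      rw [hU, Finset.disjoint_left]
      intro x hx hx'
      rw [Finset.disjoint_left] at hd
      simp only [Finset.mem_union, Finset.mem_image] at hx hx'
      rcases hx with hx | ⟨y, hy, rfl⟩ <;> rcases hx' with hx' | ⟨z, hz, hzy⟩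
      · exact hd hx hx'
      · subst hzy; exact heF _ hx (Finset.mem_insert_self _ _)
      · exact heC _ hx' (Finset.mem_insert_self _ _)
      · have : y = z := by
          rw [← Finset.erase_insert (heF y hy), ← hzy, Finset.erase_insert (heC z hz)]
        exact hd hy (this ▸ hz)
    rw [Finset.disjoint_union_right] at hdis
    have key := ((ih heF).disjUnion _ C₁ h1 hdis.1).disjUnion _ C₂ h2
      (Finset.disjoint_union_left.2 ⟨hdis.2, h12⟩)
    rw [Finset.union_assoc, hU] at key
    convert key using 1
    rw [Finset.image_union]
    ext x
    simp only [Finset.mem_union]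
    tauto

/-- The symmetric chain decomposition of a Boolean lattice. -/
lemma chainDec_powerset (K : Finset α) : ChainDec #K #K K.powerset := by
  induction K using Finset.induction_on with
  | empty =>
    have := ChainDec.disjUnion (α := α) (lo := 0) (hi := 0) ∅ {∅} .empty
      ⟨by simp, 0, 0, by simp, by simp, by simp⟩ (by simp)
    simpa using this
  | insert e K he ih =>
    rw [Finset.powerset_insert, Finset.card_insert_of_notMem he]
    exact ih.extend e fun x hx hex => he (Finset.mem_powerset.1 hx hex)

/-- Removing `∅` affects only the chain starting at `∅`, whose rank sum grows by one. -/
lemma ChainDec.erase_empty {k : ℕ} {F : Finset (Finset α)} (h : ChainDec k k F) :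
    ChainDec k (k + 1) (F.erase ∅) := by
  induction h with
  | empty => simpa using ChainDec.empty
  | disjUnion F C hF hC hd ih =>
    rw [Finset.erase_union_distrib]
    refine ih.disjUnion _ _ ?_ (hd.mono (Finset.erase_subset _ _) (Finset.erase_subset _ _))
    obtain ⟨hC, a, b, h1, h2, h3⟩ := hC
    refine ⟨hC.mono (by simp), ?_⟩
    have hmem : ∀ i, (∃ x ∈ C, #x = i) ↔ a ≤ i ∧ i ≤ b := by
      intro i
      rw [← Finset.mem_Icc, ← h3, Finset.mem_image]
    by_cases h0 : ∅ ∈ C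
    · have ha := (hmem 0).1 ⟨∅, h0, rfl⟩
      refine ⟨a + 1, b, by omega, by omega, ?_⟩
      ext i
      simp only [Finset.mem_image, Finset.mem_erase, Finset.mem_Icc]
      constructor
      · rintro ⟨x, ⟨hx0, hx⟩, rfl⟩
        have := (hmem _).1 ⟨x, hx, rfl⟩
        have := Finset.card_pos.2 (Finset.nonempty_iff_ne_empty.2 hx0)
        omega
      · rintro ⟨hi1, hi2⟩
        obtain ⟨x, hx, rfl⟩ := (hmem i).2 ⟨by omega, hi2⟩
        refine ⟨x, ⟨?_, hx⟩, rfl⟩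
        rintro rfl
        simp at hi1
    · rw [Finset.erase_eq_of_notMem h0]
      exact ⟨a, b, by omega, by omega, h3⟩

/-- The subsets of `K ∪ S` meeting `K` split into chains with rank sum `#(K ∪ S)` or
`#(K ∪ S) + 1`. -/
lemma chainDec_meeting (K S : Finset α) (hKS : Disjoint K S) :
    ChainDec (#K + #S) (#K + #S + 1) ((K ∪ S).powerset.filter fun x => ¬ Disjoint x K) := by
  induction S using Finset.induction_on with
  | empty =>
    have key := (chainDec_powerset K).erase_empty
    rw [Finset.card_empty, Nat.add_zero]
    convert key using 1
    ext x
    simp only [Finset.union_empty, Finset.mem_filter, Finset.mem_powerset, Finset.mem_erase]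
    constructor
    · rintro ⟨h1, h2⟩
      refine ⟨?_, h1⟩
      rintro rfl
      simp at h2
    · rintro ⟨h1, h2⟩
      refine ⟨h2, fun h => h1 ?_⟩
      simpa using h.eq_bot_of_le h2
  | insert e S he ih =>
    rw [Finset.disjoint_insert_right] at hKS
    have heKS : e ∉ K ∪ S := by simp [hKS.1, he]
    have key := (ih hKS.2).extend e fun x hx hex =>
      heKS (Finset.mem_powerset.1 (Finset.mem_filter.1 hx).1 hex)
    rw [Finset.card_insert_of_notMem he, Finset.union_insert, Finset.powerset_insert,
      Finset.filter_union, Finset.filter_image]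
    simpa only [Finset.disjoint_insert_left, hKS.1, not_false_eq_true, true_and,
      ← Nat.add_assoc] using key

/-! ### The bound for two disjoint antichains -/

/-- On a chain of rank sum `n` or `n + 1`, two disjoint antichains have at most as many members as
the levels `n / 2` and `n / 2 + 1`: such a chain meets one of them, and both unless it is a
singleton. -/
lemma SymmChain.card_le {n : ℕ} {C U V : Finset (Finset α)} (h : SymmChain n (n + 1) C)
    (hU : IsAntichain (· ⊆ ·) (U : Set (Finset α)))
    (hV : IsAntichain (· ⊆ ·) (V : Set (Finset α))) (hUV : Disjoint U V) :
    #(C ∩ U) + #(C ∩ V) ≤ #{x ∈ C | #x = n / 2} + #{x ∈ C | #x = n / 2 + 1} := by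
  obtain ⟨hC, a, b, h1, h2, h3⟩ := h
  have hmem : ∀ i, (∃ x ∈ C, #x = i) ↔ a ≤ i ∧ i ≤ b := by
    intro i
    rw [← Finset.mem_Icc, ← h3, Finset.mem_image]
  have hone : ∀ W : Finset (Finset α), IsAntichain (· ⊆ ·) (W : Set (Finset α)) →
      #(C ∩ W) ≤ 1 := by
    intro W hW
    rw [Finset.card_le_one]
    intro x hx y hy
    rw [Finset.mem_inter] at hx hy
    rcases hC.total hx.1 hy.1 with h | h
    · exact hW.eq hx.2 hy.2 h
    · exact (hW.eq hy.2 hx.2 h).symm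
  have hlev : ∀ i, a ≤ i → i ≤ b → 1 ≤ #{x ∈ C | #x = i} := by
    intro i hi1 hi2
    obtain ⟨x, hx, hxi⟩ := (hmem i).2 ⟨hi1, hi2⟩
    exact Finset.card_pos.2 ⟨x, Finset.mem_filter.2 ⟨hx, hxi⟩⟩
  have hU1 := hone U hU
  have hV1 := hone V hV
  rcases lt_trichotomy a b with hab | hab | hab
  · have := hlev (n / 2) (by omega) (by omega)
    have := hlev (n / 2 + 1) (by omega) (by omega)
    omega
  · have hle : #(C ∩ U) + #(C ∩ V) ≤ 1 := by
      rw [← Finset.card_union_of_disjoint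
        (hUV.mono Finset.inter_subset_right Finset.inter_subset_right),
        Finset.card_le_one]
      intro x hx y hy
      have hx : x ∈ C := by simp only [Finset.mem_union, Finset.mem_inter] at hx; tauto
      have hy : y ∈ C := by simp only [Finset.mem_union, Finset.mem_inter] at hy; tauto
      have := (hmem _).1 ⟨x, hx, rfl⟩
      have := (hmem _).1 ⟨y, hy, rfl⟩
      exact isChain_eq_of_card hC hx hy (by omega)
    rcases Nat.even_or_odd' n with ⟨c, hc | hc⟩
    · have := hlev (n / 2) (by omega) (by omega)
      omega
    · have := hlev (n / 2 + 1) (by omega) (by omega)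
      omega
  · have : C = ∅ := by
      rw [Finset.eq_empty_iff_forall_notMem]
      intro x hx
      have := (hmem _).1 ⟨x, hx, rfl⟩
      omega
    simp [this]

lemma ChainDec.card_le {n : ℕ} {F U V : Finset (Finset α)} (h : ChainDec n (n + 1) F)
    (hU : IsAntichain (· ⊆ ·) (U : Set (Finset α)))
    (hV : IsAntichain (· ⊆ ·) (V : Set (Finset α))) (hUV : Disjoint U V) :
    #(F ∩ U) + #(F ∩ V) ≤ #{x ∈ F | #x = n / 2} + #{x ∈ F | #x = n / 2 + 1} := by
  induction h with
  | empty => simp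
  | disjUnion F C hF hC hd ih =>
    have := hC.card_le hU hV hUV
    have e : ∀ W, #((F ∪ C) ∩ W) = #(F ∩ W) + #(C ∩ W) := fun W => by
      rw [Finset.union_inter_distrib_right, Finset.card_union_of_disjoint
        (hd.mono Finset.inter_subset_left Finset.inter_subset_left)]
    have e' : ∀ i, #{x ∈ F ∪ C | #x = i} = #{x ∈ F | #x = i} + #{x ∈ C | #x = i} := fun i => by
      rw [Finset.filter_union, Finset.card_union_of_disjoint
        (hd.mono (Finset.filter_subset _ _) (Finset.filter_subset _ _))]
    rw [e, e, e', e']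
    omega

/-- Two disjoint antichains of sets not contained in `G` have together at most as many members as
the two middle levels restricted to such sets. -/
lemma card_add_card_le_of_not_subset [Fintype α] (G : Finset α) {U V : Finset (Finset α)}
    (hU : IsAntichain (· ⊆ ·) (U : Set (Finset α)))
    (hV : IsAntichain (· ⊆ ·) (V : Set (Finset α))) (hUV : Disjoint U V)
    (hUG : ∀ x ∈ U, ¬ x ⊆ G) (hVG : ∀ x ∈ V, ¬ x ⊆ G) :
    #U + #V ≤ #{x : Finset α | #x = Fintype.card α / 2 ∧ ¬ x ⊆ G} +
      #{x : Finset α | #x = Fintype.card α / 2 + 1 ∧ ¬ x ⊆ G} := by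
  have hdec := chainDec_meeting Gᶜ G disjoint_compl_left
  have hcard : #Gᶜ + #G = Fintype.card α := by
    rw [add_comm]; exact Finset.card_add_card_compl G
  have hF : ((Gᶜ ∪ G).powerset.filter fun x => ¬ Disjoint x Gᶜ) =
      (Finset.univ.filter fun x => ¬ x ⊆ G) := by
    rw [Finset.union_comm, Finset.union_compl, Finset.powerset_univ]
    refine Finset.filter_congr fun x _ => not_congr ?_
    exact disjoint_compl_right_iff
  rw [hcard, hF] at hdec
  have := hdec.card_le hU hV hUV
  rw [Finset.inter_eq_right.2 (fun x hx => by simpa using hUG x hx),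
    Finset.inter_eq_right.2 (fun x hx => by simpa using hVG x hx), Finset.filter_filter,
    Finset.filter_filter] at this
  simpa only [and_comm] using this

end

/-! ### Binary tuples as sets -/

/-- The support of a binary tuple, identifying `Bⁿ` with the subsets of `Fin n`. -/
def btupleSupport {n : ℕ} (α : Fin n → Bool) : Finset (Fin n) :=
  Finset.univ.filter fun i => α i = true

lemma btupleSupport_subset {n : ℕ} {α β : Fin n → Bool} :
    btupleSupport α ⊆ btupleSupport β ↔ α ≤ β := by
  simp only [btupleSupport, Finset.subset_iff, Finset.mem_filter, Finset.mem_univ, true_and,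
    Pi.le_def, Bool.le_iff_imp]

lemma btupleSupport_injective {n : ℕ} :
    Function.Injective (btupleSupport : (Fin n → Bool) → Finset (Fin n)) := by
  intro α β h
  exact le_antisymm (btupleSupport_subset.1 h.subset) (btupleSupport_subset.1 h.symm.subset)

lemma btupleSupport_surjective {n : ℕ} :
    Function.Surjective (btupleSupport : (Fin n → Bool) → Finset (Fin n)) := by
  intro x
  refine ⟨fun i => decide (i ∈ x), ?_⟩
  simp [btupleSupport]

lemma bweight_mono {n : ℕ} {α β : Fin n → Bool} (h : α ≤ β) : bweight α ≤ bweight β :=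
  Finset.card_le_card (btupleSupport_subset.2 h)

lemma eq_of_le_of_bweight_le {n : ℕ} {α β : Fin n → Bool} (h : α ≤ β)
    (hw : bweight β ≤ bweight α) : α = β :=
  btupleSupport_injective (Finset.eq_of_subset_of_card_le (btupleSupport_subset.2 h) hw)

lemma bweight_gammaTuple {n s : ℕ} (hs : s ≤ n) : bweight (gammaTuple n s) = s := by
  have h : (Finset.univ.filter fun i => gammaTuple n s i = true).map Fin.valEmbedding =
      Finset.Ico (n - s) n := by
    ext i
    simp only [gammaTuple, decide_eq_true_eq, Finset.mem_map, Finset.mem_filter, Finset.mem_univ,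
      true_and, Fin.valEmbedding_apply, Finset.mem_Ico]
    exact ⟨fun ⟨j, hj, hji⟩ => hji ▸ ⟨hj, j.isLt⟩, fun hi => ⟨⟨i, hi.2⟩, hi.1, rfl⟩⟩
  rw [bweight, ← Finset.card_map Fin.valEmbedding, h, Nat.card_Ico]
  omega

/-- Up to weight `‖γ‖`, a tuple not below `γ` is automatically incomparable with it. -/
lemma ncard_level_incomparable {n w : ℕ} (γ : Fin n → Bool) (hw : w ≤ bweight γ) :
    {α : Fin n → Bool | bweight α = w ∧ ¬ α ≤ γ ∧ ¬ γ ≤ α}.ncard =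
      #{x : Finset (Fin n) | #x = w ∧ ¬ x ⊆ btupleSupport γ} := by
  rw [← Set.ncard_image_of_injective _ btupleSupport_injective, ← Set.ncard_coe_finset]
  congr 1
  ext x
  obtain ⟨α, rfl⟩ := btupleSupport_surjective x
  rw [btupleSupport_injective.mem_set_image]
  simp only [Set.mem_ofPred_eq, Finset.coe_filter, Finset.mem_univ, true_and, btupleSupport_subset]
  constructor
  · rintro ⟨h1, h2, -⟩
    exact ⟨h1, h2⟩
  · rintro ⟨h1, h2⟩
    have h1 : bweight α = w := h1
    refine ⟨h1, h2, fun h => h2 ?_⟩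
    exact (eq_of_le_of_bweight_le h (by omega)).ge

lemma isAntichain_of_bweight_eq {n w : ℕ} {T : Set (Fin n → Bool)}
    (h : ∀ α ∈ T, bweight α = w) : IsAntichain (· ≤ ·) T := by
  intro α hα β hβ hne hle
  exact hne (eq_of_le_of_bweight_le hle (by rw [h α hα, h β hβ]))

lemma memA_lower_upper (n s : ℕ) :
    MemA s (lowerAntichain n s) (upperAntichain n s) := by
  refine ⟨⟨?_, isAntichain_of_bweight_eq fun α hα => hα.1, ?_⟩, Set.mem_insert _ _⟩
  · exact (isAntichain_of_bweight_eq fun α hα => hα.1).insert (fun β hβ _ => hβ.2.1)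
      (fun β hβ _ => hβ.2.2)
  · rintro a (rfl | ha) b hb hle
    · exact hb.2.1 hle
    · have := bweight_mono hle
      have := ha.1
      have := hb.1
      omega

/-- For any integer `s` with `n/2 < s ≤ n`, let `T'` consist
of `γ_s` together with all tuples of weight `⌊n/2⌋` that are incomparable with
`γ_s`, and let `T''` consist of all tuples of weight `⌊n/2⌋ + 1` that are
incomparable with `γ_s`. Then `(T', T'') ∈ 𝒜_s` and `(T', T'')` has the maximum
cardinality among all pairs in `𝒜_s`. -/
theorem explicit_max_pair_in_A {n s : ℕ} (hs1 : n < 2 * s) (hs2 : s ≤ n) :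
    MemA s (lowerAntichain n s) (upperAntichain n s) ∧
    ∀ U' U'' : Set (Fin n → Bool), MemA s U' U'' →
      U'.ncard + U''.ncard ≤
        (lowerAntichain n s).ncard + (upperAntichain n s).ncard := by
  refine ⟨memA_lower_upper n s, ?_⟩
  rintro U' U'' ⟨⟨hU', hU'', hlt⟩, hγ⟩
  classical
  have hγw := bweight_gammaTuple hs2
  have hlow : (lowerAntichain n s).ncard =
      #{x : Finset (Fin n) | #x = n / 2 ∧ ¬ x ⊆ btupleSupport (gammaTuple n s)} + 1 := by
    rw [lowerAntichain, Set.ncard_insert_of_notMem (fun h => h.2.1 le_rfl),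
      ncard_level_incomparable _ (by omega)]
  have hup : (upperAntichain n s).ncard =
      #{x : Finset (Fin n) | #x = n / 2 + 1 ∧ ¬ x ⊆ btupleSupport (gammaTuple n s)} :=
    ncard_level_incomparable _ (by omega)
  have hanti : ∀ T : Set (Fin n → Bool), IsAntichain (· ≤ ·) T →
      IsAntichain (· ⊆ ·) (btupleSupport '' T) := by
    rintro T hT _ ⟨α, hα, rfl⟩ _ ⟨β, hβ, rfl⟩ hne hle
    exact hT hα hβ (fun h => hne (h ▸ rfl)) (btupleSupport_subset.1 hle)
  have key := card_add_card_le_of_not_subset (btupleSupport (gammaTuple n s))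
    (U := (btupleSupport '' (U' \ {gammaTuple n s})).toFinset)
    (V := (btupleSupport '' U'').toFinset)
    (by rw [Set.coe_toFinset]; exact hanti _ (hU'.subset Set.sdiff_subset))
    (by rw [Set.coe_toFinset]; exact hanti _ hU'')
    (by
      rw [Set.disjoint_toFinset, Set.disjoint_image_iff btupleSupport_injective,
        Set.disjoint_left]
      exact fun α hα hα' => hlt α hα.1 α hα' le_rfl)
    (by
      simp only [Set.mem_toFinset]
      rintro _ ⟨α, hα, rfl⟩ hle
      exact hU' hα.1 hγ hα.2 (btupleSupport_subset.1 hle))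
    (by
      simp only [Set.mem_toFinset]
      rintro _ ⟨α, hα, rfl⟩ hle
      exact hlt _ hγ α hα (btupleSupport_subset.1 hle))
  rw [← Set.ncard_eq_toFinset_card', ← Set.ncard_eq_toFinset_card',
    Set.ncard_image_of_injective _ btupleSupport_injective,
    Set.ncard_image_of_injective _ btupleSupport_injective, Fintype.card_fin] at key
  have := Set.ncard_sdiff_singleton_add_one hγ (Set.toFinite U')
  omega
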